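/- Let 𝓑 be a cover on a countably infinite set X and suppose (t, F, Γ) and (t′, F′, Γ′) are conditions in ℙ(𝓑) with t = t′ and F = F′. Then the two conditions are compatible: there exists a condition (t*, F*, Γ*) ∈ ℙ(𝓑) with t ⊆ t*, F ⊆ F* and Γ ∪ Γ′ ⊆ Γ*. -/

import Mathlib

/-- A cover on a (countable) set `X`: a countable family of subsets of `X` not containing
`X` itself and closed under adding finite sets. -/
def IsCover {X : Type*} (B : Set (Set X)) : Prop :=
  B.Countable ∧ Set.univ ∉ B ∧ ∀ A ∈ B, ∀ b : Set X, b.Finite → A ∪ b ∈ B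

/-- The finite sequence `l` is an initial segment of the infinite sequence `f`. -/
def IsInitSeg {X : Type*} (l : List X) (f : ℕ → X) : Prop :=
  l = (List.range l.length).map f

/-- The maximal nodes of a tree `t` of finite sequences. -/
def maximalNodes {X : Type*} (t : Set (List X)) : Set (List X) :=
  {s ∈ t | ∀ r ∈ t, s <+: r → r = s}

/-- `(t, F, Γ)` is a condition of the forcing `ℙ(𝓑)`:
1. `t` is a finite tree of finite sequences from `X`, closed under initial segments;
2. `F` maps the nodes of `t` into `𝓑`;
3. `Γ` is a finite set of infinite sequences from `X`;
4. there is a one-to-one map `β` of `Γ` onto the maximal nodes of `t` with `β x` an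
   initial segment of `x` for each `x ∈ Γ`;
5. `x n ∈ F (x↾n)` for every `x ∈ Γ` and every `n` with `x↾n ∈ t`. -/
def IsPCondition {X : Type*} (B : Set (Set X))
    (t : Set (List X)) (F : List X → Set X) (Γ : Set (ℕ → X)) : Prop :=
  t.Finite ∧ (∀ s ∈ t, ∀ r : List X, r <+: s → r ∈ t) ∧
  (∀ τ ∈ t, F τ ∈ B) ∧
  Γ.Finite ∧
  (∃ β : (ℕ → X) → List X, Set.InjOn β Γ ∧ β '' Γ = maximalNodes t ∧
    ∀ x ∈ Γ, IsInitSeg (β x) x) ∧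
  (∀ x ∈ Γ, ∀ n : ℕ, (List.range n).map x ∈ t → x n ∈ F ((List.range n).map x))

/-! Let `Δ = Γ ∪ Γ'`. Cut every sequence in the finite set `Δ` at a level `N` which is at least the
length of every node of `t` and at which distinct members of `Δ` have already split. The initial
segments of length at most `N` form a finite tree whose maximal nodes correspond bijectively to `Δ`,
and this tree contains `t` because every node of `t` extends to a maximal node of `t`, hence lies on
a member of `Γ`. Old nodes keep their labels; a new node `x↾n` is labelled by a fixed member of `𝓑`
enlarged by the finitely many values taken by `Δ` up to level `N`, which again belongs to `𝓑`. -/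

section Extension

open Filter

variable {X : Type*} {B : Set (Set X)} {t : Set (List X)} {F : List X → Set X}
  {Γ : Set (ℕ → X)}

/-- The restriction `x↾n`: the initial segment of length `n` of the sequence `x`. -/
local notation:70 x:70 "↾" n:71 => List.map x (List.range n)

theorem prefix_restrict_iff {x : ℕ → X} {n : ℕ} {r : List X} :
    r <+: x↾n ↔ ∃ m ≤ n, x↾m = r := by
  constructor
  · intro hr
    have hle : r.length ≤ n := by simpa using hr.length_le
    refine ⟨r.length, hle, ?_⟩
    rw [List.prefix_iff_eq_take.1 hr, ← List.map_take, List.take_range]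
    simp [hle]
  · rintro ⟨m, hm, rfl⟩
    simp [List.prefix_iff_eq_take, ← List.map_take, List.take_range, hm]

theorem isInitSeg_restrict (x : ℕ → X) (n : ℕ) : IsInitSeg (x↾n) x := by
  simp [IsInitSeg]

theorem IsInitSeg.of_prefix {r s : List X} {x : ℕ → X} (hs : IsInitSeg s x) (hr : r <+: s) :
    IsInitSeg r x := by
  rw [hs, prefix_restrict_iff] at hr
  obtain ⟨m, -, rfl⟩ := hr
  exact isInitSeg_restrict x m

theorem eventually_injOn_restrict (hΓ : Γ.Finite) :
    ∀ᶠ n in atTop, Set.InjOn (fun x : ℕ → X ↦ x↾n) Γ := by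
  have separated : ∀ x ∈ Γ, ∀ y ∈ Γ, ∀ᶠ n in atTop, x↾n = y↾n → x = y := by
    intro x _ y _
    by_cases hxy : x = y
    · exact .of_forall fun _ _ ↦ hxy
    obtain ⟨d, hd⟩ := Function.ne_iff.1 hxy
    filter_upwards [eventually_gt_atTop d] with n hn heq
    exact absurd (List.map_inj_left.1 heq d (List.mem_range.2 hn)) hd
  have := (eventually_all_finite hΓ).2 fun x hx ↦ (eventually_all_finite hΓ).2 (separated x hx)
  exact this.mono fun n hn x hx y hy ↦ hn x hx y hy

theorem exists_mem_maximalNodes_prefix (ht : t.Finite) {s : List X} (hs : s ∈ t) :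
    ∃ m ∈ maximalNodes t, s <+: m := by
  obtain ⟨m, ⟨hm, hsm⟩, longest⟩ := Set.exists_max_image {r ∈ t | s <+: r} List.length
    (ht.sep _) ⟨s, hs, List.prefix_rfl⟩
  exact ⟨m, ⟨hm, fun r hr hmr ↦
    (hmr.eq_of_length_le (longest r ⟨hr, hsm.trans hmr⟩)).symm⟩, hsm⟩

theorem IsPCondition.exists_isInitSeg (h : IsPCondition B t F Γ) {s : List X} (hs : s ∈ t) :
    ∃ x ∈ Γ, IsInitSeg s x := by
  obtain ⟨ht, -, -, -, ⟨β, -, hβ, hinit⟩, -⟩ := h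
  obtain ⟨m, hm, hsm⟩ := exists_mem_maximalNodes_prefix ht hs
  obtain ⟨x, hx, rfl⟩ := hβ.symm ▸ hm
  exact ⟨x, hx, (hinit x hx).of_prefix hsm⟩

theorem IsPCondition.eq_empty (h : IsPCondition B ∅ F Γ) : Γ = ∅ := by
  obtain ⟨-, -, -, -, ⟨β, -, hβ, -⟩, -⟩ := h
  simpa [maximalNodes] using hβ

/-- The tree of all initial segments of length at most `N` of the members of `Γ`; cutting a finite
set of sequences at a level `N` turns it into a finite tree. -/
def branchTree (Γ : Set (ℕ → X)) (N : ℕ) : Set (List X) :=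
  Set.image2 (fun x n ↦ x↾n) Γ (Set.Iic N)

theorem branchTree_finite (hΓ : Γ.Finite) (N : ℕ) : (branchTree Γ N).Finite :=
  hΓ.image2 _ (Set.finite_Iic N)

theorem IsInitSeg.mem_branchTree {s : List X} {x : ℕ → X} {N : ℕ} (hs : IsInitSeg s x)
    (hx : x ∈ Γ) (hN : s.length ≤ N) : s ∈ branchTree Γ N :=
  ⟨x, hx, s.length, hN, hs.symm⟩

theorem length_le_of_mem_branchTree {s : List X} {N : ℕ} (hs : s ∈ branchTree Γ N) :
    s.length ≤ N := by
  obtain ⟨x, -, n, hn, rfl⟩ := hs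
  simpa using hn

theorem mem_branchTree_of_prefix {r s : List X} {N : ℕ} (hs : s ∈ branchTree Γ N)
    (hr : r <+: s) : r ∈ branchTree Γ N := by
  have hlen := hr.length_le.trans (length_le_of_mem_branchTree hs)
  obtain ⟨x, hx, n, -, rfl⟩ := hs
  exact ((isInitSeg_restrict x n).of_prefix hr).mem_branchTree hx hlen

theorem maximalNodes_branchTree (Γ : Set (ℕ → X)) (N : ℕ) :
    maximalNodes (branchTree Γ N) = (fun x ↦ x↾N) '' Γ := by
  ext s
  constructor
  · rintro ⟨⟨x, hx, n, hn, rfl⟩, hmax⟩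
    exact ⟨x, hx, hmax _ ⟨x, hx, N, Set.self_mem_Iic, rfl⟩ (prefix_restrict_iff.2 ⟨n, hn, rfl⟩)⟩
  · rintro ⟨x, hx, rfl⟩
    refine ⟨⟨x, hx, N, Set.self_mem_Iic, rfl⟩, fun r hr hp ↦ (hp.eq_of_length_le ?_).symm⟩
    simpa using length_le_of_mem_branchTree hr

theorem isPCondition_branchTree {N : ℕ} (hΓ : Γ.Finite)
    (hinj : Set.InjOn (fun x : ℕ → X ↦ x↾N) Γ) (hF : ∀ s ∈ branchTree Γ N, F s ∈ B)
    (hmem : ∀ x ∈ Γ, ∀ n ≤ N, x n ∈ F (x↾n)) :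
    IsPCondition B (branchTree Γ N) F Γ :=
  ⟨branchTree_finite hΓ N, fun _ hs _ hr ↦ mem_branchTree_of_prefix hs hr, hF, hΓ,
    ⟨fun x ↦ x↾N, hinj, (maximalNodes_branchTree Γ N).symm, fun x _ ↦ isInitSeg_restrict x N⟩,
    fun x hx n hn ↦ hmem x hx n (by simpa using length_le_of_mem_branchTree hn)⟩

theorem exists_isPCondition_extending (hB : ∀ A ∈ B, ∀ b : Set X, b.Finite → A ∪ b ∈ B)
    (hne : B.Nonempty) (ht : t.Finite) (hF : ∀ s ∈ t, F s ∈ B) (hΓ : Γ.Finite)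
    (hbranch : ∀ s ∈ t, ∃ x ∈ Γ, IsInitSeg s x)
    (hmem : ∀ x ∈ Γ, ∀ n, x↾n ∈ t → x n ∈ F (x↾n)) :
    ∃ ts Fs, IsPCondition B ts Fs Γ ∧ t ⊆ ts ∧ Set.EqOn Fs F t := by
  classical
  obtain ⟨A, hA⟩ := hne
  obtain ⟨N, hinj, hN⟩ : ∃ N, Set.InjOn (fun x : ℕ → X ↦ x↾N) Γ ∧ ∀ s ∈ t, s.length ≤ N :=
    ((eventually_injOn_restrict hΓ).and
      ((eventually_all_finite ht).2 fun s _ ↦ eventually_ge_atTop s.length)).exists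
  let b : Set X := Set.image2 (fun x n ↦ x n) Γ (Set.Iic N)
  have hb : b.Finite := hΓ.image2 _ (Set.finite_Iic N)
  refine ⟨branchTree Γ N, t.piecewise F fun _ ↦ A ∪ b,
    isPCondition_branchTree hΓ hinj (fun s _ ↦ ?_) (fun x hx n hn ↦ ?_), fun s hs ↦ ?_,
    t.piecewise_eqOn _ _⟩
  · by_cases hs : s ∈ t
    · simpa [hs] using hF s hs
    · simpa [hs] using hB A hA b hb
  · by_cases hxn : x↾n ∈ t
    · simpa [hxn] using hmem x hx n hxn
    · have hxb : x n ∈ b := ⟨x, hx, n, hn, rfl⟩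
      simp [hxn, hxb]
  · obtain ⟨x, hx, hsx⟩ := hbranch s hs
    exact hsx.mem_branchTree hx (hN s hs)

theorem stmt11_general {Γ' : Set (ℕ → X)}
    (hB : ∀ A ∈ B, ∀ b : Set X, b.Finite → A ∪ b ∈ B)
    (h : IsPCondition B t F Γ) (h' : IsPCondition B t F Γ') :
    ∃ ts Fs, IsPCondition B ts Fs (Γ ∪ Γ') ∧ t ⊆ ts ∧ Set.EqOn Fs F t := by
  rcases t.eq_empty_or_nonempty with rfl | ⟨s, hs⟩
  · refine ⟨∅, F, ?_, subset_rfl, Set.eqOn_refl _ _⟩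
    rwa [h'.eq_empty, Set.union_empty]
  have hbranch : ∀ s ∈ t, ∃ x ∈ Γ ∪ Γ', IsInitSeg s x := fun s hs ↦
    let ⟨x, hx, hsx⟩ := h.exists_isInitSeg hs
    ⟨x, .inl hx, hsx⟩
  obtain ⟨ht, -, hF, hΓ, -, hmem⟩ := h
  obtain ⟨-, -, -, hΓ', -, hmem'⟩ := h'
  exact exists_isPCondition_extending hB ⟨F s, hF s hs⟩ ht hF (hΓ.union hΓ') hbranch
    fun x hx ↦ hx.elim (hmem x) (hmem' x)

end Extension

theorem stmt11 {X : Type*} [Countable X] [Infinite X]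
    (B : Set (Set X)) (hB : IsCover B)
    (t : Set (List X)) (F : List X → Set X) (Γ Γ' : Set (ℕ → X))
    (h : IsPCondition B t F Γ) (h' : IsPCondition B t F Γ') :
    ∃ (ts : Set (List X)) (Fs : List X → Set X) (Γs : Set (ℕ → X)),
      IsPCondition B ts Fs Γs ∧ t ⊆ ts ∧ (∀ τ ∈ t, Fs τ = F τ) ∧ Γ ∪ Γ' ⊆ Γs := by
  obtain ⟨ts, Fs, hcond, hts, hFs⟩ := stmt11_general hB.2.2 h h'
  exact ⟨ts, Fs, Γ ∪ Γ', hcond, hts, hFs, subset_rfl⟩
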